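/- Let g ∈ ℤ[x] be irreducible of degree d ≥ 1 with leading coefficient c, let α ∈ ℂ be a root of g, and let K = ℚ(α). Set 𝐃_g = |c|^{(d−1)(d−2)}·|D_g|. Then for every real x > max{2, √𝐃_g}, | Σ_{p ≤ x} ω_g(p)/p − Σ_{N(𝔭) ≤ x} 1/N(𝔭) | ≤ d·( M_ℚ(|c|) + M_ℚ(√𝐃_g) + 0.64 ), where the second sum runs over the prime ideals 𝔭 of the ring of integers O_K of K with norm N(𝔭) ≤ x. -/

import Mathlib

open Polynomial

/-- Sylvester matrix of `f` and `g` (columns of `f`-coefficients first). -/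
noncomputable def sylvesterMat (f g : Polynomial ℤ) :
    Matrix (Fin (g.natDegree + f.natDegree)) (Fin (g.natDegree + f.natDegree)) ℤ :=
  fun i j =>
    if (j : ℕ) < g.natDegree then
      (if (j : ℕ) ≤ (i : ℕ) ∧ (i : ℕ) ≤ (j : ℕ) + f.natDegree
        then f.coeff (f.natDegree + j - i) else 0)
    else
      (if (j : ℕ) - g.natDegree ≤ (i : ℕ) ∧ (i : ℕ) ≤ (j : ℕ)
        then g.coeff ((j : ℕ) - (i : ℕ)) else 0)

/-- The resultant `R(f,g)` of two integer polynomials: the determinant of the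
Sylvester matrix. -/
noncomputable def resultantZ (f g : Polynomial ℤ) : ℤ := (sylvesterMat f g).det

/-- The discriminant `D_f = ((-1)^(n(n-1)/2)/a_n) · R(f, f')` of an integer polynomial
(the division is exact). -/
noncomputable def polyDisc (f : Polynomial ℤ) : ℤ :=
  ((-1 : ℤ) ^ (f.natDegree * (f.natDegree - 1) / 2) * resultantZ f (derivative f))
    / f.leadingCoeff

/-- `ω_f(p)`: the number of `x ∈ ℤ/pℤ` with `f(x) ≡ 0 (mod p)`. -/
noncomputable def omegaPoly (f : Polynomial ℤ) (p : ℕ) : ℕ :=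
  {x : ZMod p | Polynomial.aeval x f = 0}.ncard

/-- `M_ℚ(x) = Σ_{p ≤ x} 1/p`, the sum over rational primes `p ≤ x`. -/
noncomputable def MQ (x : ℝ) : ℝ :=
  ∑ p ∈ Finset.filter Nat.Prime (Finset.range (⌊x⌋₊ + 1)), (1 : ℝ) / (p : ℝ)

/-- `Σ_{p ≤ x} ω_f(p)/p`, the sum over rational primes `p ≤ x`. -/
noncomputable def omegaSum (f : Polynomial ℤ) (x : ℝ) : ℝ :=
  ∑ p ∈ Finset.filter Nat.Prime (Finset.range (⌊x⌋₊ + 1)), (omegaPoly f p : ℝ) / (p : ℝ)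

/-- `M_K(x) = Σ_{N(𝔭) ≤ x} 1/N(𝔭)`, the sum over the (nonzero) prime ideals `𝔭` of the
ring of integers of `K` with absolute norm `N(𝔭) ≤ x`. -/
noncomputable def MK (K : Type*) [Field K] [NumberField K] (x : ℝ) : ℝ :=
  ∑' P : {P : Ideal (NumberField.RingOfIntegers K) //
      P.IsPrime ∧ P ≠ ⊥ ∧ (Ideal.absNorm P : ℝ) ≤ x},
    (1 : ℝ) / (Ideal.absNorm P.1 : ℝ)


lemma abs_resZ (f g : ℤ[X]) : |resultantZ f g| = |resultant g f| := by
  unfold resultantZ resultant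
  let e2 : Fin (g.natDegree + f.natDegree) ≃ Fin (g.natDegree + f.natDegree) :=
    finSumFinEquiv.symm.trans ((Equiv.sumCongr Fin.revPerm Fin.revPerm).trans finSumFinEquiv)
  have : sylvesterMat f g = (sylvester g f g.natDegree f.natDegree).submatrix Fin.revPerm e2 := by
    ext i j
    induction j using Fin.addCases with
    | left j =>
      simp only [sylvesterMat, sylvester, Matrix.submatrix_apply, Matrix.of_apply, e2]
      simp [Fin.val_rev]
      have := i.2
      have := j.2
      by_cases h : (j:ℕ) ≤ i ∧ (i:ℕ) ≤ j + f.natDegree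
      · rw [if_pos h, if_pos (by omega)]
        congr 1; omega
      · rw [if_neg h, if_neg (by omega)]
    | right j =>
      simp only [sylvesterMat, sylvester, Matrix.submatrix_apply, Matrix.of_apply, e2]
      simp [Fin.val_rev]
      have := i.2
      have := j.2
      by_cases h : (j:ℕ) ≤ i ∧ (i:ℕ) ≤ g.natDegree + j
      · rw [if_pos h, if_pos (by omega)]
        congr 1; omega
      · rw [if_neg h, if_neg (by omega)]
  rw [this, Matrix.abs_det_submatrix_equiv_equiv]

lemma abs_res_deriv (g : ℤ[X]) (hd : 1 ≤ g.natDegree) :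
    |resultantZ g (derivative g)| =
      |resultant g (derivative g) g.natDegree (g.natDegree - 1)| := by
  rw [abs_resZ, resultant_comm, natDegree_derivative, abs_mul]
  simp

lemma abs_polyDisc (g : ℤ[X]) (hd : 1 ≤ g.natDegree) :
    |g.leadingCoeff| * |polyDisc g| =
      |resultant g (derivative g) g.natDegree (g.natDegree - 1)| := by
  rw [← abs_res_deriv g hd, polyDisc, ← abs_mul, Int.mul_ediv_cancel']
  · rw [abs_mul]; simp
  · apply Dvd.dvd.mul_left
    rw [← dvd_abs, abs_res_deriv g hd, dvd_abs, resultant_deriv (natDegree_pos_iff_degree_pos.1 hd)]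
    exact ⟨(-1) ^ (g.natDegree * (g.natDegree - 1) / 2) * g.discr, by ring⟩


lemma irrQ (g : ℤ[X]) (hirr : Irreducible g) (hd : 1 ≤ g.natDegree) :
    Irreducible (g.map (Int.castRingHom ℚ)) :=
  (IsPrimitive.Int.irreducible_iff_irreducible_map_cast (hirr.isPrimitive (by omega))).1 hirr

lemma exists_pb (K : Type*) [Field K] [NumberField K] (α : K)
    (hgen : IntermediateField.adjoin ℚ {α} = ⊤) : ∃ pb : PowerBasis ℚ K, pb.gen = α := by
  have hi : IsIntegral ℚ α := Algebra.IsIntegral.isIntegral α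
  refine ⟨PowerBasis.ofAdjoinEqTop hi ?_, PowerBasis.ofAdjoinEqTop_gen hi _⟩
  rw [← IntermediateField.adjoin_simple_toSubalgebra_of_isAlgebraic hi.isAlgebraic, hgen]
  rfl

lemma norm_deriv (g : ℤ[X]) (hirr : Irreducible g) (hd : 1 ≤ g.natDegree)
    (K : Type*) [Field K] [NumberField K] (α : K)
    (hroot : Polynomial.aeval α g = 0)
    (hgen : IntermediateField.adjoin ℚ {α} = ⊤) :
    ((resultant g (derivative g) g.natDegree (g.natDegree - 1) : ℤ) : ℚ) =
      (g.leadingCoeff : ℚ) ^ (g.natDegree - 1) * Algebra.norm ℚ (aeval α (derivative g)) := by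
  obtain ⟨pb, hpb⟩ := exists_pb K α hgen
  have hirrQ := irrQ g hirr hd
  have hinj : Function.Injective (Int.castRingHom ℂ) := (Int.castRingHom ℂ).injective_int
  have hg0 : g ≠ 0 := hirr.ne_zero
  have hmap : g.map (Int.castRingHom ℂ) = (g.map (Int.castRingHom ℚ)).map (algebraMap ℚ ℂ) := by
    rw [Polynomial.map_map]; congr 1
  have hgC : g.map (Int.castRingHom ℂ) ≠ 0 := (Polynomial.map_ne_zero_iff hinj).2 hg0
  have hnodup : (g.map (Int.castRingHom ℂ)).roots.Nodup := by
    rw [hmap]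
    exact nodup_roots (hirrQ.separable.map)
  have hroots : (g.map (Int.castRingHom ℂ)).roots =
      (Finset.univ : Finset (K →ₐ[ℚ] ℂ)).val.map (fun σ => σ α) := by
    refine (Multiset.Nodup.ext hnodup ?_).2 ?_
    · refine (Multiset.nodup_map_iff_of_injective ?_).2 Finset.univ.nodup
      intro σ τ h
      exact pb.algHom_ext (by rw [hpb]; exact h)
    · intro z
      rw [mem_roots hgC]
      simp only [Multiset.mem_map, Finset.mem_val, Finset.mem_univ, true_and]
      constructor
      · intro hz
        refine ⟨pb.lift z ?_, by rw [← hpb, pb.lift_gen]⟩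
        have h1 : aeval pb.gen (g.map (Int.castRingHom ℚ)) = 0 := by
          rw [hpb]
          have := aeval_map_algebraMap ℚ α g
          rw [hroot] at this
          simpa using this
        have h2 : minpoly ℚ pb.gen ∣ g.map (Int.castRingHom ℚ) := minpoly.dvd _ _ h1
        have h3 : Associated (minpoly ℚ pb.gen) (g.map (Int.castRingHom ℚ)) :=
          (minpoly.irreducible pb.isIntegral_gen).associated_of_dvd hirrQ h2
        obtain ⟨q, hq⟩ := h3.symm.dvd
        rw [hq, map_mul, aeval_def, eval₂_eq_eval_map, ← hmap, hz, zero_mul]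
      · rintro ⟨σ, rfl⟩
        rw [IsRoot.def, eval_map]
        have : aeval (σ α) g = 0 := by
          have := aeval_algHom_apply (σ.restrictScalars ℤ) α g
          rw [hroot] at this
          simpa using this
        simpa [aeval_def] using this
  apply (algebraMap ℚ ℂ).injective
  have hres := resultant_map_map g (derivative g) g.natDegree (g.natDegree - 1) (Int.castRingHom ℂ)
  have hnd : (g.map (Int.castRingHom ℂ)).natDegree = g.natDegree := natDegree_map_eq_of_injective hinj g
  have := resultant_eq_prod_eval (g.map (Int.castRingHom ℂ)) ((derivative g).map (Int.castRingHom ℂ))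
    (g.natDegree - 1) (natDegree_map_le.trans (natDegree_derivative_le g)) (IsAlgClosed.splits _)
  rw [hnd, hres, hroots, leadingCoeff_map_of_injective hinj] at this
  rw [map_mul, Algebra.norm_eq_prod_embeddings]
  simp only [map_pow]
  simp only [eq_intCast, map_intCast, eq_ratCast, Rat.cast_intCast] at this ⊢
  rw [this]
  congr 1
  rw [Multiset.map_map]
  change ∏ σ : K →ₐ[ℚ] ℂ, _ = _
  refine Finset.prod_congr rfl fun σ _ => ?_
  have := aeval_algHom_apply (σ.restrictScalars ℤ) α (derivative g)
  simp only [Function.comp]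
  rw [eval_map]
  simp only [AlgHom.restrictScalars_apply] at this
  rw [← this]
  simp [aeval_def]

open NumberField in
lemma sq_dvd_of_dvd_exponent (K : Type*) [Field K] [NumberField K] (θ : 𝓞 K)
    (pb : PowerBasis ℚ K) (hpb : pb.gen = (θ : K)) (p : ℕ) (hp : p.Prime)
    (hdvd : p ∣ RingOfIntegers.exponent θ) (E : ℤ) (hE : Algebra.discr ℚ pb.basis = E) :
    (p : ℤ) ^ 2 ∣ E := by
  have hE0 : E ≠ 0 := by
    rintro rfl
    exact Algebra.discr_not_zero_of_basis ℚ pb.basis (by simpa using hE)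
  have hmem : ∀ z : 𝓞 K, (z : K) ∈ Algebra.adjoin ℤ {(θ : K)} ↔ z ∈ Algebra.adjoin ℤ {θ} := by
    intro z
    have h1 := (Algebra.adjoin_singleton_eq_range_aeval ℤ (θ : K))
    rw [h1, Algebra.adjoin_singleton_eq_range_aeval ℤ θ]
    constructor
    · rintro ⟨q, hq⟩
      refine ⟨q, RingOfIntegers.ext ?_⟩
      rw [← hq]
      exact (aeval_algebraMap_apply K θ q).symm
    · rintro ⟨q, hq⟩
      refine ⟨q, ?_⟩
      rw [← hq]
      exact (aeval_algebraMap_apply K θ q)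
  have hcond : ((E : ℤ) : 𝓞 K) ∈ conductor ℤ θ := by
    intro z
    rw [← hmem]
    have := Algebra.discr_mul_isIntegral_mem_adjoin (R := ℤ) ℚ (B := pb)
      (by rw [hpb]; exact θ.isIntegral_coe) (z.isIntegral_coe)
    rw [hE, hpb] at this
    convert this using 1
    simp [Algebra.smul_def]
  -- exponent positive
  have hset : ({d : ℕ | 0 < d ∧ (d : 𝓞 K) ∈ conductor ℤ θ}).Nonempty := by
    refine ⟨E.natAbs, Int.natAbs_pos.2 hE0, ?_⟩
    rcases Int.natAbs_eq E with h | h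
    · rw [h] at hcond; simpa using hcond
    · rw [h] at hcond
      have := (conductor ℤ θ).neg_mem hcond
      simpa using this
  have hexp := Nat.sInf_mem hset
  have hexp2 : ∀ n : ℕ, 0 < n → (n : 𝓞 K) ∈ conductor ℤ θ → RingOfIntegers.exponent θ ≤ n := by
    intro n h1 h2
    rw [RingOfIntegers.exponent_eq_sInf]
    exact Nat.sInf_le ⟨h1, h2⟩
  rw [← RingOfIntegers.exponent_eq_sInf] at hexp
  obtain ⟨e', he'⟩ := hdvd
  rw [he'] at hexp hexp2
  obtain ⟨hpos, hmemc⟩ := hexp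
  have he'pos : 0 < e' := Nat.pos_of_mul_pos_left hpos
  have hnot : ¬ ((e' : 𝓞 K) ∈ conductor ℤ θ) := by
    intro h
    have := hexp2 e' he'pos h
    have := hp.two_le
    nlinarith
  have : ∃ y : 𝓞 K, (e' : 𝓞 K) * y ∉ Algebra.adjoin ℤ {θ} := by
    by_contra! hcon
    exact hnot hcon
  obtain ⟨y, hy⟩ := this
  have hpy := hmemc y
  set γ : 𝓞 K := (e' : 𝓞 K) * y with hγ
  have hpγ : (p : 𝓞 K) * γ ∈ Algebra.adjoin ℤ {θ} := by
    convert hpy using 1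
    rw [hγ]; push_cast; ring
  rw [Algebra.adjoin_singleton_eq_range_aeval] at hpγ hy
  obtain ⟨q, hq⟩ := hpγ
  have hmon : (minpoly ℤ θ).Monic := minpoly.monic θ.isIntegral
  set r := q %ₘ minpoly ℤ θ with hr
  have hrq : aeval θ r = (p : 𝓞 K) * γ := by
    rw [← hq, hr]
    exact aeval_modByMonic_eq_self_of_root (minpoly.aeval ℤ θ)
  have hndvd : ¬ (C (p : ℤ) ∣ r) := by
    rintro ⟨q', hq'⟩
    apply hy
    refine ⟨q', ?_⟩
    rw [hq'] at hrq
    have hp0 : (p : 𝓞 K) ≠ 0 := by exact_mod_cast hp.ne_zero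
    apply mul_left_cancel₀ hp0
    rw [← hrq]; simp
  rw [C_dvd_iff_dvd_coeff] at hndvd
  push Not at hndvd
  obtain ⟨i, hi⟩ := hndvd
  have hdim : pb.dim = (minpoly ℤ θ).natDegree := by
    rw [← pb.natDegree_minpoly, hpb]
    have h1 : minpoly ℚ (θ : K) = (minpoly ℤ (θ : K)).map (algebraMap ℤ ℚ) :=
      minpoly.isIntegrallyClosed_eq_field_fractions' ℚ θ.isIntegral_coe
    rw [h1, RingOfIntegers.minpoly_coe, hmon.natDegree_map]
  have hdeg : r.natDegree < pb.dim := by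
    rw [hdim]
    refine natDegree_modByMonic_lt _ hmon ?_
    intro h
    have := pb.dim_pos
    rw [hdim, h] at this
    simp at this
  have hilt : i < pb.dim := by
    refine lt_of_le_of_lt (le_natDegree_of_ne_zero ?_) hdeg
    intro h; rw [h] at hi; simp at hi
  have hp0 : (p : ℚ) ≠ 0 := by exact_mod_cast hp.ne_zero
  have hpK : (p : K) ≠ 0 := by exact_mod_cast hp.ne_zero
  have hγK : (γ : K) = ∑ j : Fin pb.dim, ((r.coeff j : ℚ) / p) • pb.basis j := by
    apply mul_left_cancel₀ hpK
    have h1 : aeval (θ : K) r = (p : K) * (γ : K) := by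
      have := aeval_algebraMap_apply K θ r
      rw [hrq] at this
      simpa using this
    rw [← h1, aeval_eq_sum_range' hdeg, Finset.sum_range, Finset.mul_sum]
    refine Finset.sum_congr rfl fun j _ => ?_
    rw [pb.coe_basis, hpb, Algebra.smul_def, Algebra.smul_def]
    simp
    field_simp
  have hrepr : pb.basis.repr (γ : K) ⟨i, hilt⟩ = (r.coeff i : ℚ) / p := by
    rw [hγK, pb.basis.repr_sum_self]
  set b' : Fin pb.dim → K := Function.update pb.basis ⟨i, hilt⟩ (γ : K) with hb'
  have hint : IsIntegral ℤ (Algebra.discr ℚ b') := by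
    apply Algebra.discr_isIntegral
    intro j
    rw [hb']
    by_cases hj : j = ⟨i, hilt⟩
    · subst hj; simp; exact γ.isIntegral_coe
    · rw [Function.update_of_ne hj, pb.coe_basis, hpb]
      exact θ.isIntegral_coe.pow _
  obtain ⟨m, hm⟩ := IsIntegrallyClosed.isIntegral_iff.1 hint
  have hdisc : Algebra.discr ℚ b' = ((r.coeff i : ℚ) / p) ^ 2 * E := by
    have h1 := Algebra.discr_of_matrix_vecMul (A := ℚ) (B := K) pb.basis (pb.basis.toMatrix b')
    rw [Module.Basis.toMatrix_map_vecMul, hE] at h1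
    rw [h1, hb', Module.Basis.toMatrix_update, Module.Basis.toMatrix_self, ← Matrix.cramer_apply,
      Matrix.cramer_one]
    simp [hrepr]
  rw [hdisc] at hm
  have hm2 : m * (p : ℤ) ^ 2 = (r.coeff i) ^ 2 * E := by
    have : (m : ℚ) * (p : ℚ) ^ 2 = (r.coeff i : ℚ) ^ 2 * E := by
      have hm' : (m : ℚ) = ((r.coeff i : ℚ) / p) ^ 2 * E := by simpa using hm
      rw [hm']; field_simp
    exact_mod_cast this
  have hcop : IsCoprime ((p : ℤ) ^ 2) ((r.coeff i) ^ 2) :=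
    ((Nat.prime_iff_prime_int.1 hp).coprime_iff_not_dvd.2 hi).pow
  exact hcop.dvd_of_dvd_mul_left ⟨m, by rw [← hm2]; ring⟩

open NumberField in
lemma exists_beta (g : ℤ[X]) (hirr : Irreducible g) (hd : 1 ≤ g.natDegree)
    (K : Type*) [Field K] [NumberField K] (α : K)
    (hroot : Polynomial.aeval α g = 0)
    (hgen : IntermediateField.adjoin ℚ {α} = ⊤) :
    Module.finrank ℚ K = g.natDegree ∧
    ∃ β : 𝓞 K, (β : K) = (g.leadingCoeff : K) * α ∧ minpoly ℤ β = integralNormalization g ∧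
      IntermediateField.adjoin ℚ {(β : K)} = ⊤ := by
  have hirrQ := irrQ g hirr hd
  have hg0 : g ≠ 0 := hirr.ne_zero
  have hc0 : g.leadingCoeff ≠ 0 := leadingCoeff_ne_zero.2 hg0
  have hcK : (g.leadingCoeff : K) ≠ 0 := by exact_mod_cast hc0
  have hinj : Function.Injective (Int.castRingHom ℚ) := (Int.castRingHom ℚ).injective_int
  have h1 : aeval α (g.map (Int.castRingHom ℚ)) = 0 := by
    have := aeval_map_algebraMap ℚ α g
    rw [hroot] at this
    simpa using this
  have hfin : Module.finrank ℚ K = g.natDegree := by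
    obtain ⟨pb, hpb⟩ := exists_pb K α hgen
    rw [pb.finrank, ← pb.natDegree_minpoly, hpb, ← natDegree_map_eq_of_injective hinj g]
    apply natDegree_eq_of_degree_eq
    apply degree_eq_degree_of_associated
    exact (minpoly.irreducible (Algebra.IsIntegral.isIntegral α)).associated_of_dvd hirrQ
      (minpoly.dvd _ _ h1)
  refine ⟨hfin, ?_⟩
  have hroot2 : aeval ((g.leadingCoeff : K) * α) (integralNormalization g) = 0 := by
    have := integralNormalization_aeval_eq_zero hroot (by
      intro x hx
      simpa using hx)
    simpa using this
  have hint : IsIntegral ℤ ((g.leadingCoeff : K) * α) :=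
    ⟨integralNormalization g, monic_integralNormalization hg0, hroot2⟩
  have hadj : IntermediateField.adjoin ℚ {((g.leadingCoeff : K) * α)} = ⊤ := by
    rw [← top_le_iff, ← hgen, IntermediateField.adjoin_simple_le_iff]
    have h3 : ((g.leadingCoeff : K) * α) ∈ IntermediateField.adjoin ℚ {((g.leadingCoeff : K) * α)} :=
      IntermediateField.mem_adjoin_simple_self ℚ _
    have h4 := mul_mem (inv_mem (intCast_mem (IntermediateField.adjoin ℚ {((g.leadingCoeff : K) * α)}) g.leadingCoeff)) h3
    rwa [inv_mul_cancel_left₀ hcK] at h4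
  obtain ⟨β, hβ⟩ : ∃ β : 𝓞 K, (β : K) = (g.leadingCoeff : K) * α := ⟨⟨_, hint⟩, rfl⟩
  refine ⟨β, hβ, ?_, by rw [hβ]; exact hadj⟩
  rw [← RingOfIntegers.minpoly_coe, hβ]
  have hmon := minpoly.monic hint
  refine eq_of_monic_of_dvd_of_natDegree_le hmon (monic_integralNormalization hg0)
    (minpoly.isIntegrallyClosed_dvd hint hroot2) ?_ |>.symm
  rw [natDegree_integralNormalization, ← hfin]
  obtain ⟨pb, hpb⟩ := exists_pb K _ hadj
  rw [pb.finrank, ← pb.natDegree_minpoly, hpb, minpoly.isIntegrallyClosed_eq_field_fractions' ℚ hint,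
    hmon.natDegree_map]

open NumberField in
lemma discr_eq (g : ℤ[X]) (hirr : Irreducible g) (hd : 1 ≤ g.natDegree)
    (K : Type*) [Field K] [NumberField K] (α : K)
    (hroot : Polynomial.aeval α g = 0)
    (hgen : IntermediateField.adjoin ℚ {α} = ⊤) (β : 𝓞 K)
    (hβ : (β : K) = (g.leadingCoeff : K) * α) (hmin : minpoly ℤ β = integralNormalization g)
    (pb : PowerBasis ℚ K) (hpb : pb.gen = (β : K)) :
    |Algebra.discr ℚ pb.basis| = |(g.leadingCoeff : ℚ)| ^ ((g.natDegree - 1) * (g.natDegree - 2))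
      * |(polyDisc g : ℚ)| := by
  have hg0 : g ≠ 0 := hirr.ne_zero
  have hc0 : (g.leadingCoeff : ℚ) ≠ 0 := by exact_mod_cast leadingCoeff_ne_zero.2 hg0
  have hfin := (exists_beta g hirr hd K α hroot hgen).1
  have hN := norm_deriv g hirr hd K α hroot hgen
  have hP := abs_polyDisc g hd
  have hcomp : (integralNormalization g).comp (C g.leadingCoeff * X)
      = C g.leadingCoeff ^ (g.natDegree - 1) * g := by
    have := integralNormalization_eval₂_leadingCoeff_mul hd (C : ℤ →+* ℤ[X]) X
    rw [eval₂_C_X] at this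
    exact this
  have hder := congrArg (fun q => aeval α (derivative q)) hcomp
  simp only [derivative_comp] at hder
  rw [← C_pow, derivative_C_mul] at hder
  simp only [derivative_C_mul, derivative_X, map_mul, aeval_C, aeval_comp, aeval_X, mul_one] at hder
  have hder2 : (g.leadingCoeff : K) * aeval (β : K) (derivative (integralNormalization g)) =
      (g.leadingCoeff : K) ^ (g.natDegree - 1) * aeval α (derivative g) := by
    rw [hβ]; simpa using hder
  have hdisc := Algebra.discr_powerBasis_eq_norm ℚ pb
  rw [hpb, minpoly.isIntegrallyClosed_eq_field_fractions' ℚ β.isIntegral_coe,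
    RingOfIntegers.minpoly_coe, hmin, derivative_map, aeval_map_algebraMap] at hdisc
  have hn := congrArg (Algebra.norm ℚ) hder2
  have hcast : (g.leadingCoeff : K) = algebraMap ℚ K (g.leadingCoeff : ℚ) := by simp
  rw [map_mul, map_mul, map_pow, hcast, Algebra.norm_algebraMap, hfin] at hn
  have hP' : |(g.leadingCoeff : ℚ)| * |(polyDisc g : ℚ)| =
      |((resultant g (derivative g) g.natDegree (g.natDegree - 1) : ℤ) : ℚ)| := by
    exact_mod_cast hP
  rw [hN] at hP'
  rw [hdisc, abs_mul]
  have habs := congrArg abs hn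
  simp only [abs_mul, abs_pow, abs_neg, abs_one, one_pow, one_mul] at habs hP' ⊢
  set A := |(Algebra.norm ℚ) ((aeval (β : K)) (derivative g.integralNormalization))|
  set B := |(Algebra.norm ℚ) ((aeval α) (derivative g))|
  set c := |(g.leadingCoeff : ℚ)|
  have hcpos : 0 < c := abs_pos.2 hc0
  obtain ⟨n, hn⟩ : ∃ n, g.natDegree = n + 1 := ⟨g.natDegree - 1, by omega⟩
  rw [hn] at habs hP' ⊢
  simp only [Nat.add_sub_cancel] at habs hP' ⊢
  have hce : (c ^ (n + 1) * c ^ n) ≠ 0 := by positivity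
  apply mul_left_cancel₀ hce
  rcases n with _ | n
  · simp only [zero_add, pow_one, pow_zero, one_mul, zero_mul, mul_one] at habs hP' ⊢
    rw [habs, ← hP']
  · have : n + 1 + 1 - 2 = n := by omega
    rw [this]
    calc c ^ (n + 1 + 1) * c ^ (n+1) * A = c ^ (n+1) * (c ^ (n + 1 + 1) * A) := by ring
      _ = (c ^ (n + 1)) ^ (n + 1 + 1) * (c ^ (n+1) * B) := by rw [habs]; ring
      _ = _ := by rw [← hP']; ring

open NumberField Ideal in
lemma omega_eq (g : ℤ[X]) (hd : 1 ≤ g.natDegree)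
    (K : Type*) [Field K] [NumberField K] (β : 𝓞 K)
    (hmin : minpoly ℤ β = integralNormalization g) (p : ℕ) (hp : p.Prime)
    (hpc : ¬ ((p : ℤ) ∣ g.leadingCoeff)) (hpe : ¬ p ∣ RingOfIntegers.exponent β) :
    omegaPoly g p = {P : Ideal (𝓞 K) | P ∈ primesOver (span {(p : ℤ)}) (𝓞 K) ∧
      absNorm P = p}.ncard := by
  have : Fact p.Prime := ⟨hp⟩
  have hc0 : ((g.leadingCoeff : ℤ) : ZMod p) ≠ 0 := by
    rwa [Ne, ZMod.intCast_zmod_eq_zero_iff_dvd]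
  have h1 : omegaPoly g p = {y : ZMod p | aeval y (integralNormalization g) = 0}.ncard := by
    unfold omegaPoly
    have hkey : ∀ x : ZMod p, aeval ((g.leadingCoeff : ZMod p) * x) (integralNormalization g) =
        (g.leadingCoeff : ZMod p) ^ (g.natDegree - 1) * aeval x g := by
      intro x
      have := integralNormalization_eval₂_leadingCoeff_mul hd (algebraMap ℤ (ZMod p)) x
      simpa [aeval_def] using this
    refine Set.ncard_congr (fun x _ => (g.leadingCoeff : ZMod p) * x) ?_ ?_ ?_
    · intro x hx
      simp only [Set.mem_ofPred_eq] at hx ⊢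
      rw [hkey, hx, mul_zero]
    · intro a b _ _ h
      exact mul_left_cancel₀ hc0 h
    · intro y hy
      refine ⟨(g.leadingCoeff : ZMod p)⁻¹ * y, ?_, mul_inv_cancel_left₀ hc0 y⟩
      have := hkey ((g.leadingCoeff : ZMod p)⁻¹ * y)
      rw [mul_inv_cancel_left₀ hc0 y] at this
      simp only [Set.mem_ofPred_eq] at hy ⊢
      rw [hy] at this
      exact (mul_eq_zero.1 this.symm).resolve_left (pow_ne_zero _ hc0)
  rw [h1, ← hmin]
  have hne : (minpoly ℤ β).map (Int.castRingHom (ZMod p)) ≠ 0 :=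
    map_monic_ne_zero (minpoly.monic β.isIntegral)
  have hroot : ∀ a : ZMod p, aeval a (minpoly ℤ β) = 0 ↔
      (X - C a) ∈ RingOfIntegers.monicFactorsMod β p := by
    intro a
    rw [Multiset.mem_toFinset, Polynomial.mem_normalizedFactors_iff hne, dvd_iff_isRoot, IsRoot.def,
      eval_map]
    simp [irreducible_X_sub_C, monic_X_sub_C, aeval_def]
  let e := NumberField.Ideal.primesOverSpanEquivMonicFactorsMod hpe
  have hdeg : ∀ (Q : (ZMod p)[X]) (hQ : Q ∈ RingOfIntegers.monicFactorsMod β p),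
      absNorm ((e.symm ⟨Q, hQ⟩ : Ideal (𝓞 K))) = p ^ Q.natDegree := by
    intro Q hQ
    have h2 := NumberField.Ideal.inertiaDeg_primesOverSpanEquivMonicFactorsMod_symm_apply' hpe hQ
    have := (e.symm ⟨Q, hQ⟩).2.1
    have := (e.symm ⟨Q, hQ⟩).2.2
    rw [← absNorm_pow_inertiaDeg (span {(p : ℤ)}), ← h2]
    simp [e]
  refine Set.ncard_congr (fun a ha => ((e.symm ⟨X - C a, (hroot a).1 ha⟩ : _) : Ideal (𝓞 K))) ?_ ?_ ?_
  · intro a ha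
    exact ⟨(e.symm ⟨X - C a, (hroot a).1 ha⟩).2, by rw [hdeg]; simp⟩
  · intro a b ha hb h
    have := e.symm.injective (Subtype.ext h)
    simpa using this
  · rintro P ⟨hP, hN⟩
    obtain ⟨Q, hQ⟩ : ∃ Q, e ⟨P, hP⟩ = Q := ⟨_, rfl⟩
    have hPQ : e.symm ⟨Q.1, Q.2⟩ = ⟨P, hP⟩ := by rw [← hQ]; simp
    have h3 := hdeg Q.1 Q.2
    rw [hPQ] at h3
    simp only [hN] at h3
    have h4 : Q.1.natDegree = 1 := by
      exact (Nat.pow_right_injective hp.two_le (by simpa using h3)).symm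
    have hm := Q.2
    rw [Multiset.mem_toFinset, Polynomial.mem_normalizedFactors_iff hne] at hm
    have h5 : Q.1 = X - C (-(Q.1.coeff 0)) := by
      rw [hm.2.1.eq_X_add_C h4]; simp
    have h6 : (X - C (-(Q.1.coeff 0))) ∈ RingOfIntegers.monicFactorsMod β p := by
      rw [← h5]; exact Q.2
    refine ⟨-(Q.1.coeff 0), (hroot _).2 h6, ?_⟩
    have : (⟨X - C (-(Q.1.coeff 0)), h6⟩ : RingOfIntegers.monicFactorsMod β p) = Q :=
      Subtype.ext h5.symm
    rw [this]
    exact congrArg Subtype.val hPQ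

open NumberField Ideal in
lemma card_primesOver_le (K : Type*) [Field K] [NumberField K] (p : ℕ) (hp : p.Prime) :
    (IsDedekindDomain.primesOverFinset (span {(p : ℤ)}) (𝓞 K)).card ≤ Module.finrank ℚ K := by
  have : Fact p.Prime := ⟨hp⟩
  have : (span {(p : ℤ)}).IsMaximal := Int.ideal_span_isMaximal_of_prime p
  exact card_primesOverFinset_le_finrank (𝓞 K) ℚ K (p := span {(p : ℤ)}) (by simp [hp.ne_zero])

open NumberField Ideal in
lemma mem_pof (K : Type*) [Field K] [NumberField K] (p : ℕ) (hp : p.Prime) (P : Ideal (𝓞 K)) :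
    P ∈ IsDedekindDomain.primesOverFinset (span {(p : ℤ)}) (𝓞 K) ↔ P ∈ primesOver (span {(p : ℤ)}) (𝓞 K) := by
  have : Fact p.Prime := ⟨hp⟩
  have : (span {(p : ℤ)}).IsMaximal := Int.ideal_span_isMaximal_of_prime p
  exact IsDedekindDomain.mem_primesOverFinset_iff (by simp [hp.ne_zero]) _

open NumberField Ideal in
lemma absNorm_of_mem (K : Type*) [Field K] [NumberField K] (p : ℕ) (hp : p.Prime) (P : Ideal (𝓞 K))
    (hP : P ∈ IsDedekindDomain.primesOverFinset (span {(p : ℤ)}) (𝓞 K)) : ∃ f, 1 ≤ f ∧ absNorm P = p ^ f := by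
  rw [mem_pof K p hp] at hP
  have := hP.1
  have := hP.2
  refine ⟨P.inertiaDeg ℤ, inertiaDeg_pos P ℤ, ?_⟩
  rw [← absNorm_pow_inertiaDeg (span {(p : ℤ)})]
  simp

open NumberField Ideal in
lemma MK_eq (K : Type*) [Field K] [NumberField K] (x : ℝ) (hx : 0 ≤ x) :
    MK K x = ∑ p ∈ Finset.filter Nat.Prime (Finset.range (⌊x⌋₊ + 1)),
      ∑ P ∈ (IsDedekindDomain.primesOverFinset (span {(p : ℤ)}) (𝓞 K)).filter (fun P => (absNorm P : ℝ) ≤ x),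
        (1 : ℝ) / (absNorm P : ℝ) := by
  classical
  have hfin : {P : Ideal (𝓞 K) | P.IsPrime ∧ P ≠ ⊥ ∧ (absNorm P : ℝ) ≤ x}.Finite := by
    refine (Ideal.finite_setOfPred_absNorm_le (S := 𝓞 K) ⌊x⌋₊).subset ?_
    rintro P ⟨_, _, h⟩
    exact Nat.le_floor h
  have h1 : MK K x = ∑ P ∈ hfin.toFinset, (1 : ℝ) / (absNorm P : ℝ) := by
    unfold MK
    rw [← Finset.tsum_subtype' hfin.toFinset (fun P : Ideal (𝓞 K) => (1 : ℝ) / (absNorm P : ℝ))]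
    rw [hfin.coe_toFinset]
    rfl
  have hprime : ∀ P : Ideal (𝓞 K), P.IsPrime → P ≠ ⊥ → (absNorm (under ℤ P)).Prime := by
    intro P h1 h2
    have : NeZero P := ⟨h2⟩
    exact Nat.absNorm_under_prime P
  rw [h1, ← Finset.sum_fiberwise_of_maps_to (t := Finset.filter Nat.Prime (Finset.range (⌊x⌋₊ + 1)))
    (g := fun P => absNorm (under ℤ P))]
  · refine Finset.sum_congr rfl fun p hp => ?_
    have hp' := (Finset.mem_filter.1 hp).2
    refine Finset.sum_congr ?_ fun _ _ => rfl
    ext P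
    rw [Finset.mem_filter, Finset.mem_filter, hfin.mem_toFinset, mem_pof K p hp']
    constructor
    · rintro ⟨⟨h1, h2, h3⟩, h4⟩
      refine ⟨⟨h1, ⟨?_⟩⟩, h3⟩
      rw [← h4, Int.ideal_span_absNorm_eq_self]
    · rintro ⟨⟨h1, ⟨h2⟩⟩, h3⟩
      refine ⟨⟨h1, ?_, h3⟩, ?_⟩
      · rintro rfl
        have : (p : ℤ) ∈ under ℤ (⊥ : Ideal (𝓞 K)) := by
          rw [← h2]; exact mem_span_singleton_self _
        simp [under_def] at this
        exact hp'.ne_zero this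
      · rw [← h2]; simp
  · intro P hP
    rw [hfin.mem_toFinset] at hP
    obtain ⟨h1, h2, h3⟩ := hP
    refine Finset.mem_filter.2 ⟨?_, hprime P h1 h2⟩
    rw [Finset.mem_range, Nat.lt_succ_iff]
    refine le_trans (Nat.le_of_dvd ?_ (Int.absNorm_under_dvd_absNorm P)) (Nat.le_floor h3)
    exact Nat.pos_of_ne_zero (by rwa [Ne, absNorm_eq_zero_iff])

open NumberField Ideal in
lemma inner_bound (K : Type*) [Field K] [NumberField K] (x : ℝ) (p : ℕ) (hp : p.Prime)
    (hpx : (p : ℝ) ≤ x) :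
    |∑ P ∈ (IsDedekindDomain.primesOverFinset (span {(p : ℤ)}) (𝓞 K)).filter (fun P => (absNorm P : ℝ) ≤ x),
        (1 : ℝ) / (absNorm P : ℝ) -
      (((IsDedekindDomain.primesOverFinset (span {(p : ℤ)}) (𝓞 K)).filter (fun P => absNorm P = p)).card : ℝ) / p| ≤
      (Module.finrank ℚ K : ℝ) * (1 / (p : ℝ) ^ 2) := by
  classical
  set S := IsDedekindDomain.primesOverFinset (span {(p : ℤ)}) (𝓞 K)
  have hppos : (0 : ℝ) < p := by exact_mod_cast hp.pos
  rw [← Finset.sum_filter_add_sum_filter_not _ (fun P => absNorm P = p)]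
  have h1 : ∑ P ∈ (S.filter (fun P => (absNorm P : ℝ) ≤ x)).filter (fun P => absNorm P = p),
      (1 : ℝ) / (absNorm P : ℝ) = ((S.filter (fun P => absNorm P = p)).card : ℝ) / p := by
    rw [Finset.filter_filter, Finset.sum_congr (s₂ := S.filter (fun P => absNorm P = p))
      (g := fun _ => (1 : ℝ) / p)]
    · rw [Finset.sum_const, nsmul_eq_mul]; ring
    · ext P
      simp only [Finset.mem_filter]
      constructor
      · rintro ⟨h1, h2, h3⟩; exact ⟨h1, h3⟩
      · rintro ⟨h1, h3⟩; exact ⟨h1, by rw [h3]; exact hpx, h3⟩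
    · intro P hP
      rw [(Finset.mem_filter.1 hP).2]
  rw [h1, add_sub_cancel_left, abs_of_nonneg (Finset.sum_nonneg fun _ _ => by positivity)]
  refine (Finset.sum_le_card_nsmul _ _ (1 / (p : ℝ) ^ 2) ?_).trans ?_
  · intro P hP
    simp only [Finset.mem_filter] at hP
    obtain ⟨f, hf, hN⟩ := absNorm_of_mem K p hp P hP.1.1
    have hf2 : 2 ≤ f := by
      by_contra h
      have : f = 1 := by omega
      rw [this, pow_one] at hN
      exact hP.2 hN
    rw [hN]
    push_cast
    apply one_div_le_one_div_of_le (by positivity)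
    exact pow_le_pow_right₀ (by exact_mod_cast hp.one_le) hf2
  · rw [nsmul_eq_mul]
    gcongr
    exact (Finset.card_le_card ((Finset.filter_subset _ _).trans (Finset.filter_subset _ _))).trans
      (card_primesOver_le K p hp)

lemma omega_le (g : ℤ[X]) (hirr : Irreducible g) (hd : 1 ≤ g.natDegree) (p : ℕ) (hp : p.Prime) :
    omegaPoly g p ≤ g.natDegree := by
  have : Fact p.Prime := ⟨hp⟩
  have hprim := hirr.isPrimitive (by omega)
  have hne : g.map (Int.castRingHom (ZMod p)) ≠ 0 := by
    intro h
    have : C (p : ℤ) ∣ g := by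
      rw [C_dvd_iff_dvd_coeff]
      intro i
      have := congrArg (fun q => coeff q i) h
      simp only [coeff_map, coeff_zero, eq_intCast] at this
      rwa [ZMod.intCast_zmod_eq_zero_iff_dvd] at this
    exact (Nat.prime_iff_prime_int.1 hp).not_isUnit (hprim _ this)
  have hset : {y : ZMod p | aeval y g = 0} =
      ((g.map (Int.castRingHom (ZMod p))).roots.toFinset : Set (ZMod p)) := by
    ext y
    simp [mem_roots hne, eval_map, aeval_def]
  unfold omegaPoly
  rw [hset, Set.ncard_coe_finset]
  exact (Multiset.toFinset_card_le _).trans ((card_roots' _).trans natDegree_map_le)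

lemma prime_sq_sum (N : ℕ) :
    ∑ p ∈ Finset.filter Nat.Prime (Finset.range N), (1 : ℝ) / (p : ℝ) ^ 2 ≤ 0.64 := by
  have key : ∀ n : ℕ, ∑ p ∈ Finset.filter Nat.Prime (Finset.range (n + 5)), (1 : ℝ) / (p : ℝ) ^ 2
      ≤ 1 / 4 + 1 / 9 + (1 / 4 - 1 / ((n : ℝ) + 4)) := by
    intro n
    induction n with
    | zero =>
      have : Finset.filter Nat.Prime (Finset.range (0 + 5)) = {2, 3} := by decide
      rw [this]
      norm_num
    | succ n ih =>
      rw [show n + 1 + 5 = (n + 5) + 1 by ring, Finset.range_add_one, Finset.filter_insert]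
      have h2 : (1 : ℝ) / ((n + 5 : ℕ) : ℝ) ^ 2 ≤ 1 / ((n : ℝ) + 4) - 1 / ((n : ℝ) + 5) := by
        push_cast
        rw [div_sub_div _ _ (by positivity) (by positivity), div_le_div_iff₀ (by positivity) (by positivity)]
        nlinarith [(Nat.cast_nonneg n : (0 : ℝ) ≤ n)]
      have h3 : ((n + 1 : ℕ) : ℝ) + 4 = (n : ℝ) + 5 := by push_cast; ring
      rw [h3]
      have h4 : (0 : ℝ) ≤ (1 : ℝ) / ((n + 5 : ℕ) : ℝ) ^ 2 := by positivity
      split_ifs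
      · rw [Finset.sum_insert (by simp)]
        linarith
      · linarith
  refine le_trans (Finset.sum_le_sum_of_subset_of_nonneg ?_ fun _ _ _ => by positivity)
    ((key N).trans ?_)
  · apply Finset.filter_subset_filter
    intro i hi
    simp only [Finset.mem_range] at hi ⊢
    omega
  · have : (0 : ℝ) ≤ 1 / ((N : ℝ) + 4) := by positivity
    have h : (1 : ℝ) / 4 + 1 / 9 + 1 / 4 ≤ 0.64 := by norm_num
    linarith

lemma sum_le_MQ (x y : ℝ) :
    ∑ p ∈ Finset.filter Nat.Prime (Finset.range (⌊x⌋₊ + 1)),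
      (if (p : ℝ) ≤ y then (1 : ℝ) / (p : ℝ) else 0) ≤ MQ y := by
  unfold MQ
  rw [← Finset.sum_filter]
  refine Finset.sum_le_sum_of_subset_of_nonneg ?_ fun _ _ _ => by positivity
  intro p hp
  simp only [Finset.mem_filter, Finset.mem_range] at hp ⊢
  exact ⟨Nat.lt_succ_of_le (Nat.le_floor hp.2), hp.1.2⟩

/-- **Theorem 1 (Mertens-type sum).** Let `g ∈ ℤ[x]` be irreducible of degree `d ≥ 1` with
leading coefficient `c`, let `α` be a root of `g`, and `K = ℚ(α)`. Set
`𝐃_g = |c|^{(d-1)(d-2)} |D_g|`. For every real `x > max{2, √𝐃_g}`,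
`|Σ_{p ≤ x} ω_g(p)/p − Σ_{N(𝔭) ≤ x} 1/N(𝔭)| ≤ d (M_ℚ(|c|) + M_ℚ(√𝐃_g) + 0.64)`. -/
theorem mertens_sum_vs_omega_sum (g : Polynomial ℤ) (hirr : Irreducible g)
    (d : ℕ) (hd : d = g.natDegree) (hd1 : 1 ≤ d)
    (c : ℤ) (hc : c = g.leadingCoeff)
    (K : Type*) [Field K] [NumberField K] (α : K)
    (hroot : Polynomial.aeval α g = 0)
    (hgen : IntermediateField.adjoin ℚ {α} = ⊤)
    (Dg : ℝ) (hDg : Dg = (|c| : ℝ) ^ ((d - 1) * (d - 2)) * (|polyDisc g| : ℝ))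
    (x : ℝ) (hx : x > max 2 (Real.sqrt Dg)) :
    |omegaSum g x - MK K x| ≤ (d : ℝ) * (MQ (|c| : ℝ) + MQ (Real.sqrt Dg) + 0.64) := by
  classical
  subst hd hc
  obtain ⟨hfin, β, hβ, hmin, hβgen⟩ := exists_beta g hirr hd1 K α hroot hgen
  obtain ⟨pb, hpb⟩ := exists_pb K (β : K) hβgen
  have hdisc := discr_eq g hirr hd1 K α hroot hgen β hβ hmin pb hpb
  have hc0 : g.leadingCoeff ≠ 0 := by
    rw [Ne, Polynomial.leadingCoeff_eq_zero]; exact hirr.ne_zero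
  obtain ⟨E, hE⟩ : ∃ E : ℤ, Algebra.discr ℚ pb.basis = E := by
    rcases abs_choice (Algebra.discr ℚ pb.basis) with h | h
    · refine ⟨|g.leadingCoeff| ^ ((g.natDegree - 1) * (g.natDegree - 2)) * |polyDisc g|, ?_⟩
      push_cast
      rw [← hdisc, h]
    · refine ⟨-(|g.leadingCoeff| ^ ((g.natDegree - 1) * (g.natDegree - 2)) * |polyDisc g|), ?_⟩
      push_cast
      rw [← hdisc, h, neg_neg]
  have hE0 : E ≠ 0 := by
    rintro rfl
    exact Algebra.discr_not_zero_of_basis ℚ pb.basis (by simpa using hE)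
  have hED : ((|E| : ℤ) : ℝ) = Dg := by
    rw [hE] at hdisc
    have : |E| = |g.leadingCoeff| ^ ((g.natDegree - 1) * (g.natDegree - 2)) * |polyDisc g| := by
      exact_mod_cast hdisc
    rw [this, hDg]
    push_cast
    rfl
  have hx2 : (2 : ℝ) < x := lt_of_le_of_lt (le_max_left _ _) hx
  rw [MK_eq K x (by linarith)]
  unfold omegaSum
  rw [← Finset.sum_sub_distrib]
  refine (Finset.abs_sum_le_sum_abs _ _).trans ?_
  have hterm : ∀ p ∈ Finset.filter Nat.Prime (Finset.range (⌊x⌋₊ + 1)),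
      |(omegaPoly g p : ℝ) / (p : ℝ) -
        ∑ P ∈ (IsDedekindDomain.primesOverFinset (Ideal.span {(p : ℤ)})
          (NumberField.RingOfIntegers K)).filter (fun P => (Ideal.absNorm P : ℝ) ≤ x),
          (1 : ℝ) / (Ideal.absNorm P : ℝ)| ≤
      (g.natDegree : ℝ) * ((if (p : ℝ) ≤ |(g.leadingCoeff : ℝ)| then (1 : ℝ) / (p : ℝ) else 0) +
        (if (p : ℝ) ≤ Real.sqrt Dg then (1 : ℝ) / (p : ℝ) else 0) + 1 / (p : ℝ) ^ 2) := by
    intro p hp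
    obtain ⟨hpr, hp⟩ := Finset.mem_filter.1 hp
    have hpx : (p : ℝ) ≤ x :=
      (Nat.le_floor_iff (by linarith)).1 (Nat.lt_succ_iff.1 (Finset.mem_range.1 hpr))
    have hppos : (0 : ℝ) < p := by exact_mod_cast hp.pos
    have hib := inner_bound K x p hp hpx
    rw [hfin] at hib
    have hcard := card_primesOver_le K p hp
    rw [hfin] at hcard
    have hom := omega_le g hirr hd1 p hp
    have hex := omega_eq g hd1 K β hmin p hp
    have hset : {P : Ideal (NumberField.RingOfIntegers K) |
        P ∈ Ideal.primesOver (Ideal.span {(p : ℤ)}) (NumberField.RingOfIntegers K) ∧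
        Ideal.absNorm P = p} = (((IsDedekindDomain.primesOverFinset (Ideal.span {(p : ℤ)})
          (NumberField.RingOfIntegers K)).filter (fun P => Ideal.absNorm P = p) :
            Finset (Ideal (NumberField.RingOfIntegers K))) :
          Set (Ideal (NumberField.RingOfIntegers K))) := by
      ext P
      rw [Finset.mem_coe, Finset.mem_filter, mem_pof K p hp]
      rfl
    rw [hset, Set.ncard_coe_finset] at hex
    have hn1 := (Finset.card_filter_le (IsDedekindDomain.primesOverFinset (Ideal.span {(p : ℤ)})
          (NumberField.RingOfIntegers K)) (fun P => Ideal.absNorm P = p)).trans hcard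
    generalize ((IsDedekindDomain.primesOverFinset (Ideal.span {(p : ℤ)})
          (NumberField.RingOfIntegers K)).filter (fun P => Ideal.absNorm P = p)).card = n1
      at hib hex hn1
    generalize (∑ P ∈ (IsDedekindDomain.primesOverFinset (Ideal.span {(p : ℤ)})
          (NumberField.RingOfIntegers K)).filter (fun P => (Ideal.absNorm P : ℝ) ≤ x),
          (1 : ℝ) / (Ideal.absNorm P : ℝ)) = I at hib ⊢
    have hi1 : (0 : ℝ) ≤ if (p : ℝ) ≤ |(g.leadingCoeff : ℝ)| then (1 : ℝ) / (p : ℝ) else 0 := by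
      split_ifs <;> positivity
    have hi2 : (0 : ℝ) ≤ if (p : ℝ) ≤ Real.sqrt Dg then (1 : ℝ) / (p : ℝ) else 0 := by
      split_ifs <;> positivity
    have hpart : |(omegaPoly g p : ℝ) / p - (n1 : ℝ) / p| ≤ (g.natDegree : ℝ) *
        ((if (p : ℝ) ≤ |(g.leadingCoeff : ℝ)| then (1 : ℝ) / (p : ℝ) else 0) +
        (if (p : ℝ) ≤ Real.sqrt Dg then (1 : ℝ) / (p : ℝ) else 0)) := by
      have hbad : |(omegaPoly g p : ℝ) / p - (n1 : ℝ) / p| ≤ (g.natDegree : ℝ) * (1 / p) := by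
        rw [← sub_div, abs_div, abs_of_pos hppos, div_eq_mul_one_div]
        have h1 : (omegaPoly g p : ℝ) ≤ g.natDegree := by exact_mod_cast hom
        have h2 : (n1 : ℝ) ≤ g.natDegree := by exact_mod_cast hn1
        have h3 : (0 : ℝ) ≤ n1 := Nat.cast_nonneg _
        have h4 : (0 : ℝ) ≤ omegaPoly g p := Nat.cast_nonneg _
        gcongr
        rw [abs_le]
        constructor <;> linarith
      by_cases hpc : (p : ℤ) ∣ g.leadingCoeff
      · have hle : (p : ℝ) ≤ |(g.leadingCoeff : ℝ)| := by
          have := Int.le_of_dvd (abs_pos.2 hc0) ((dvd_abs _ _).2 hpc)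
          exact_mod_cast this
        refine hbad.trans (mul_le_mul_of_nonneg_left ?_ (Nat.cast_nonneg _))
        rw [if_pos hle]
        linarith
      · by_cases hpe : p ∣ RingOfIntegers.exponent β
        · have hle : (p : ℝ) ≤ Real.sqrt Dg := by
            have h1 := sq_dvd_of_dvd_exponent K β pb hpb p hp hpe E hE
            have := Int.le_of_dvd (abs_pos.2 hE0) ((dvd_abs _ _).2 h1)
            apply Real.le_sqrt_of_sq_le
            rw [← hED]
            exact_mod_cast this
          refine hbad.trans (mul_le_mul_of_nonneg_left ?_ (Nat.cast_nonneg _))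
          rw [if_pos hle]
          linarith
        · rw [hex hpc hpe, sub_self, abs_zero]
          positivity
    rw [abs_sub_comm] at hib
    have := abs_sub_le ((omegaPoly g p : ℝ) / p) ((n1 : ℝ) / p) I
    rw [mul_add]
    linarith
  refine (Finset.sum_le_sum hterm).trans ?_
  rw [← Finset.mul_sum, Finset.sum_add_distrib, Finset.sum_add_distrib]
  refine mul_le_mul_of_nonneg_left ?_ (Nat.cast_nonneg _)
  exact add_le_add (add_le_add (sum_le_MQ _ _) (sum_le_MQ _ _)) (prime_sq_sum _)
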